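/- Let T be a tree on n ≥ 16 vertices with odd diameter, and let ξ_n(T) denote the smallest eigenvalue of the eccentricity matrix 𝓔(T). If n is odd then ξ_n(T) ≤ −√((16n−21+√(800n−1419))/2), and if n is even then ξ_n(T) ≤ −√((16n−21+5√(32n−67))/2); in each case equality holds if and only if T is isomorphic to T_{n,5}^{⌊(n−6)/2⌋, ⌈(n−6)/2⌉}. -/

import Mathlib

open SimpleGraph Finset Matrix Polynomial

/-- The eccentricity of a vertex: the greatest distance from `u` to any vertex. -/
noncomputable def ecc {V : Type*} [Fintype V] (G : SimpleGraph V) (u : V) : ℕ :=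
  Finset.univ.sup fun v => G.dist u v

/-- The diameter of a graph: the greatest distance between any pair of vertices. -/
noncomputable def gdiam {V : Type*} [Fintype V] (G : SimpleGraph V) : ℕ :=
  Finset.univ.sup fun p : V × V => G.dist p.1 p.2

/-- The eccentricity matrix: `(u,v)` entry is `d(u,v)` if `d(u,v) = min (e u) (e v)`,
and `0` otherwise. -/
noncomputable def eccMatrix {V : Type*} [Fintype V] (G : SimpleGraph V) : Matrix V V ℝ :=
  Matrix.of fun u v =>
    if G.dist u v = min (ecc G u) (ecc G v) then (G.dist u v : ℝ) else 0

/-- The least eigenvalue of a real matrix, as the infimum of the real roots of its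
characteristic polynomial. -/
noncomputable def minEig {m : Type*} [Fintype m] [DecidableEq m] (M : Matrix m m ℝ) : ℝ :=
  sInf {x : ℝ | M.charpoly.IsRoot x}

/-- The tree `T_{n,d}^{a,b}`: the path `v₀v₁⋯v_d` together with `a` pendant vertices attached
to `v_{(d-1)/2}` and `b` pendant vertices attached to `v_{(d+1)/2}`. -/
def Tndab (d a b : ℕ) : SimpleGraph (Fin (d+1) ⊕ Fin a ⊕ Fin b) :=
  SimpleGraph.fromRel (fun x y =>
    (∃ i : Fin d, x = Sum.inl i.castSucc ∧ y = Sum.inl i.succ) ∨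
    (∃ j : Fin a, x = Sum.inl ⟨(d-1)/2, by omega⟩ ∧ y = Sum.inr (Sum.inl j)) ∨
    (∃ j : Fin b, x = Sum.inl ⟨(d+1)/2, by omega⟩ ∧ y = Sum.inr (Sum.inr j)))

/-!
The central edge of a tree of diameter `2 * r + 1` splits it into two sides. The distance between
vertices on opposite sides is the sum of their depths below this edge plus one, and the eccentricity
matrix retains exactly those distances for which one of the two depths is the maximal depth `r`. It
is therefore a nonnegative bipartite matrix, so its least eigenvalue is the negative of its spectral
radius, and a positive test vector for the latter is determined by its values on the vertices of
maximal depth on the two sides.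

For `r ≥ 2`, select one vertex of depth `r` on each side and replace the depths by `2` at these two,
`0` at the ends of the central edge and `1` elsewhere. This lowers the matrix entrywise, strictly
somewhere unless `r = 2` and the depths were of this form already, in which case the tree is some
`T_{n,5}^{a,b}`. The spectral radius of the lowered matrix depends only on the sizes of the two
sides and is smallest when their product is largest, that is, when they are balanced. For `r = 1`
the tree is a double star, whose spectral radius is explicit and larger once `n ≥ 16`.
-/

section LeastEigenvalue

variable {m : Type*} [Fintype m] {M : Matrix m m ℝ} {z : m → ℝ} {t : ℝ}

-- Perron's argument: compare at an index where `|v i| / z i` is maximal.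
lemma abs_eigenvalue_le (hM : ∀ i j, 0 ≤ M i j) (hz : ∀ i, 0 < z i)
    (hMz : ∀ i, (M *ᵥ z) i ≤ t * z i) {v : m → ℝ} (hv : v ≠ 0) {μ : ℝ} (hμ : M *ᵥ v = μ • v) :
    |μ| ≤ t := by
  obtain ⟨k, hk⟩ := Function.ne_iff.1 hv
  have : Nonempty m := ⟨k⟩
  obtain ⟨i, -, hi⟩ := Finset.univ.exists_max_image (fun i => |v i| / z i) univ_nonempty
  set c := |v i| / z i
  have hvi : |v i| = c * z i := (div_mul_cancel₀ _ (hz i).ne').symm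
  have hvc : ∀ j, |v j| ≤ c * z j := fun j => (div_le_iff₀ (hz j)).1 (hi j (mem_univ j))
  have hc0 : 0 < c := (div_pos (abs_pos.2 hk) (hz k)).trans_le (hi k (mem_univ k))
  have hle : |μ| * (c * z i) ≤ t * (c * z i) := calc
    |μ| * (c * z i) = |∑ j, M i j * v j| := by
      rw [← hvi, ← abs_mul]; exact congrArg abs (congrFun hμ i).symm
    _ ≤ ∑ j, M i j * |v j| := (abs_sum_le_sum_abs _ _).trans_eq
      (sum_congr rfl fun j _ => by rw [abs_mul, abs_of_nonneg (hM i j)])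
    _ ≤ ∑ j, M i j * (c * z j) := sum_le_sum fun j _ => mul_le_mul_of_nonneg_left (hvc j) (hM i j)
    _ = c * (M *ᵥ z) i := by
      simp only [mulVec, dotProduct, mul_sum]; exact sum_congr rfl fun j _ => by ring
    _ ≤ c * (t * z i) := mul_le_mul_of_nonneg_left (hMz i) hc0.le
    _ = t * (c * z i) := by ring
  exact le_of_mul_le_mul_right hle (mul_pos hc0 (hz i))

/-- The vector `z` with its sign reversed on the class `side i = false` of a bipartition. It turns
Perron vectors of a bipartite matrix into eigenvectors for the least eigenvalue. -/
def signed (side : m → Bool) (z : m → ℝ) : m → ℝ := fun i => if side i then z i else -z i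

variable {side : m → Bool}

lemma mulVec_signed (hside : ∀ i j, side i = side j → M i j = 0) (z : m → ℝ) :
    M *ᵥ signed side z = -signed side (M *ᵥ z) := by
  ext i
  have h (j : m) : M i j * signed side z j = -(if side i then M i j * z j else -(M i j * z j)) := by
    have := hside i j
    cases hi : side i <;> cases hj : side j <;> simp_all [signed]
  simp only [Pi.neg_apply, mulVec, dotProduct, h, sum_neg_distrib]
  cases hi : side i <;> simp [signed, hi, mulVec, dotProduct]

lemma signed_dotProduct_signed (x y : m → ℝ) : signed side x ⬝ᵥ signed side y = x ⬝ᵥ y :=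
  sum_congr rfl fun i _ => by simp only [signed]; split_ifs <;> ring

variable [DecidableEq m]

lemma isRoot_charpoly_iff_exists_mulVec_eq_smul {μ : ℝ} :
    M.charpoly.IsRoot μ ↔ ∃ v : m → ℝ, v ≠ 0 ∧ M *ᵥ v = μ • v := by
  rw [← Matrix.charpoly_toLin', ← Module.End.hasEigenvalue_iff_isRoot_charpoly]
  constructor
  · intro h
    obtain ⟨v, hv⟩ := h.exists_hasEigenvector
    exact ⟨v, hv.2, by simpa using hv.apply_eq_smul⟩
  · rintro ⟨v, hv, h⟩
    exact Module.End.hasEigenvalue_of_hasEigenvector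
      (Module.End.hasEigenvector_iff.2 ⟨Module.End.mem_eigenspace_iff.2 (by simpa using h), hv⟩)

lemma minEig_le_of_isRoot {μ : ℝ} (h : M.charpoly.IsRoot μ) : minEig M ≤ μ :=
  csInf_le (Polynomial.finite_setOfPred_isRoot M.charpoly_monic.ne_zero).bddBelow h

lemma minEig_mul_dotProduct_self_le (hM : M.IsSymm) (x : m → ℝ) :
    minEig M * (x ⬝ᵥ x) ≤ x ⬝ᵥ M *ᵥ x := by
  set c := minEig M
  have hH : (M - algebraMap ℝ (Matrix m m ℝ) c).IsHermitian := by
    rw [Matrix.IsHermitian, Matrix.conjTranspose_eq_transpose_of_trivial, Matrix.transpose_sub,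
      hM.eq, Matrix.algebraMap_eq_diagonal, Matrix.diagonal_transpose]
  have hP : (M - algebraMap ℝ (Matrix m m ℝ) c).PosSemidef := by
    refine hH.posSemidef_iff_eigenvalues_nonneg.2 fun i => ?_
    have hi := hH.eigenvalues_mem_spectrum_real i
    rw [← spectrum.sub_singleton_eq] at hi
    obtain ⟨μ, hμ, _, rfl, hi⟩ := hi
    have := minEig_le_of_isRoot (Matrix.mem_spectrum_iff_isRoot_charpoly.1 hμ)
    simp only [Pi.zero_apply, ← hi]
    linarith
  have := hP.dotProduct_mulVec_nonneg x
  simp only [star_trivial, Algebra.algebraMap_eq_smul_one, Matrix.sub_mulVec, Matrix.smul_mulVec,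
    Matrix.one_mulVec, dotProduct_sub, dotProduct_smul, smul_eq_mul] at this
  linarith

lemma minEig_eq_neg [Nonempty m] (hM : ∀ i j, 0 ≤ M i j)
    (hside : ∀ i j, side i = side j → M i j = 0) (hz : ∀ i, 0 < z i) (hMz : M *ᵥ z = t • z) :
    minEig M = -t := by
  refine IsLeast.csInf_eq ⟨?_, fun μ hμ => ?_⟩
  · refine isRoot_charpoly_iff_exists_mulVec_eq_smul.2 ⟨signed side z, fun h => ?_, ?_⟩
    · obtain ⟨i⟩ := ‹Nonempty m›
      have h0 := congrFun h i
      have hi := hz i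
      simp only [signed, Pi.zero_apply] at h0
      split_ifs at h0 <;> linarith
    · rw [mulVec_signed hside, hMz]
      ext i
      simp only [signed, Pi.neg_apply, Pi.smul_apply, smul_eq_mul]
      split_ifs <;> ring
  · obtain ⟨v, hv, hμv⟩ := isRoot_charpoly_iff_exists_mulVec_eq_smul.1 hμ
    exact (abs_le.1 (abs_eigenvalue_le hM hz (fun i => (congrFun hMz i).le) hv hμv)).1

lemma minEig_lt_neg (hM : M.IsSymm) (hside : ∀ i j, side i = side j → M i j = 0)
    (hz : ∀ i, 0 < z i) (hMz : ∀ i, t * z i ≤ (M *ᵥ z) i) (hlt : ∃ i, t * z i < (M *ᵥ z) i) :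
    minEig M < -t := by
  have hle := minEig_mul_dotProduct_self_le hM (signed side z)
  rw [mulVec_signed hside, dotProduct_neg, signed_dotProduct_signed, signed_dotProduct_signed]
    at hle
  obtain ⟨k, hk⟩ := hlt
  have hzz : 0 < z ⬝ᵥ z := sum_pos (fun i _ => mul_pos (hz i) (hz i)) ⟨k, mem_univ k⟩
  have hzMz : t * (z ⬝ᵥ z) < z ⬝ᵥ M *ᵥ z := by
    rw [← smul_eq_mul, ← dotProduct_smul]
    exact sum_lt_sum (fun i _ => mul_le_mul_of_nonneg_left (hMz i) (hz i).le)
      ⟨k, mem_univ k, mul_lt_mul_of_pos_left hk (hz k)⟩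
  nlinarith

end LeastEigenvalue

section SplitMatrix

variable {V : Type*} (side : V → Bool) (d : V → ℕ) (r : ℕ)

/-- The bipartite matrix with entry `d u + d v + 1` for `u`, `v` on opposite sides of which at least
one has maximal depth `r`. The eccentricity matrix of a tree of diameter `2 * r + 1` has this form,
with `d` the distance to the nearer end of the central edge. -/
def splitMatrix : Matrix V V ℝ :=
  of fun u v => if side u ≠ side v ∧ (d u = r ∨ d v = r) then (d u : ℝ) + d v + 1 else 0

variable [Fintype V]

/-- The number of vertices of maximal depth `r` on side `s`. -/
def outerCard (s : Bool) : ℕ := #{v | side v = s ∧ d v = r}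

/-- The sum of the squared entries of `splitMatrix` between a fixed vertex of depth `r` and the
vertices of smaller depth on the opposite side `s`. -/
def innerWeight (s : Bool) : ℝ := ∑ v with side v = s ∧ d v ≠ r, ((d v : ℝ) + r + 1) ^ 2

/-- The quadratic whose roots are the squares of the eigenvalues of `splitMatrix` that belong to
eigenvectors constant on the vertices of depth `r` of either side. -/
def splitPoly (x : ℝ) : ℝ :=
  (x - outerCard side d r true * innerWeight side d r false) *
    (x - outerCard side d r false * innerWeight side d r true) -
  (2 * r + 1) ^ 2 * (outerCard side d r true * outerCard side d r false) * x

/-- The extension of prescribed values `ζ` on the vertices of depth `r` of either side by the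
eigenvalue equation for `t` at all other vertices. -/
noncomputable def splitVec (t : ℝ) (ζ : Bool → ℝ) (v : V) : ℝ :=
  if d v = r then ζ (side v)
  else (d v + r + 1) * outerCard side d r (!side v) * ζ (!side v) / t

variable {side d r} {t : ℝ} {ζ : Bool → ℝ} {u : V} {s : Bool}

lemma splitPoly_eq (s : Bool) (x : ℝ) :
    splitPoly side d r x =
      (x - outerCard side d r s * innerWeight side d r (!s)) *
        (x - outerCard side d r (!s) * innerWeight side d r s) -
      (2 * r + 1) ^ 2 * (outerCard side d r s * outerCard side d r (!s)) * x := by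
  cases s
  · simp only [splitPoly, Bool.not_false]
    ring
  · rfl

lemma outerCard_pos (h : ∃ v, side v = s ∧ d v = r) : 0 < outerCard side d r s :=
  card_pos.2 (h.imp fun v hv => mem_filter.2 ⟨mem_univ v, hv⟩)

lemma sum_outer_splitVec (c : ℝ) :
    ∑ v with side v = s ∧ d v = r, c * splitVec side d r t ζ v =
      c * outerCard side d r s * ζ s := by
  rw [sum_congr rfl fun v hv => by
    rw [splitVec, if_pos (mem_filter.1 hv).2.2, (mem_filter.1 hv).2.1]]
  rw [sum_const, nsmul_eq_mul, outerCard]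
  ring

lemma sum_inner_splitVec :
    ∑ v with side v = s ∧ d v ≠ r, ((d v : ℝ) + r + 1) * splitVec side d r t ζ v =
      outerCard side d r (!s) * innerWeight side d r s * ζ (!s) / t := by
  simp only [innerWeight, mul_sum, sum_mul, sum_div]
  refine sum_congr rfl fun v hv => ?_
  rw [splitVec, if_neg (mem_filter.1 hv).2.2, (mem_filter.1 hv).2.1]
  ring

lemma splitMatrix_mulVec_of_ne (hu : d u ≠ r) (z : V → ℝ) :
    (splitMatrix side d r *ᵥ z) u =
      ∑ v with side v = !side u ∧ d v = r, ((d u : ℝ) + r + 1) * z v := by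
  simp only [mulVec, dotProduct, splitMatrix, of_apply, sum_filter, hu, false_or, ite_mul, zero_mul]
  refine sum_congr rfl fun v _ => if_ctx_congr ?_ (fun h => by rw [h.2]) fun _ => rfl
  rw [Bool.eq_not_iff, ne_comm]

lemma splitMatrix_mulVec_of_eq (hu : d u = r) (z : V → ℝ) :
    (splitMatrix side d r *ᵥ z) u =
      ∑ v with side v = !side u ∧ d v = r, (2 * (r : ℝ) + 1) * z v +
        ∑ v with side v = !side u ∧ d v ≠ r, ((d v : ℝ) + r + 1) * z v := by
  simp only [mulVec, dotProduct, splitMatrix, of_apply, sum_filter, ← sum_add_distrib, hu,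
    Bool.eq_not_iff, true_or, and_true, ne_comm (a := side u)]
  refine sum_congr rfl fun v _ => ?_
  by_cases hs : side v = side u
  · simp [hs]
  by_cases hv : d v = r
  · simp [hs, hv, two_mul]
  · simp [hs, hv, add_comm (r : ℝ)]

lemma splitMatrix_mulVec_splitVec_of_ne (ht : t ≠ 0) (hu : d u ≠ r) :
    (splitMatrix side d r *ᵥ splitVec side d r t ζ) u = t * splitVec side d r t ζ u := by
  rw [splitMatrix_mulVec_of_ne hu, sum_outer_splitVec, splitVec, if_neg hu]
  field_simp

lemma splitMatrix_mulVec_splitVec_of_eq (hu : d u = r) :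
    (splitMatrix side d r *ᵥ splitVec side d r t ζ) u =
      (2 * r + 1) * outerCard side d r (!side u) * ζ (!side u) +
        outerCard side d r (side u) * innerWeight side d r (!side u) * ζ (side u) / t := by
  rw [splitMatrix_mulVec_of_eq hu, sum_outer_splitVec, sum_inner_splitVec, Bool.not_not]

lemma splitVec_pos (ht : 0 < t) (hζ : ∀ s, 0 < ζ s) (h : ∀ s, 0 < outerCard side d r s) (v : V) :
    0 < splitVec side d r t ζ v := by
  have hℓ : (0 : ℝ) < outerCard side d r (!side v) := Nat.cast_pos.2 (h _)
  have := hζ (!side v)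
  unfold splitVec
  split_ifs
  · exact hζ _
  · positivity

-- The values on the outer vertices are chosen to satisfy the eigenvalue equation on side `s`; the
-- equation on the other side then fails by a multiple of `splitPoly (t ^ 2)`.
lemma exists_pos_splitMatrix_mulVec (h : ∀ s, 0 < outerCard side d r s) (ht : 0 < t)
    (hs : outerCard side d r s * innerWeight side d r (!s) < t ^ 2) :
    ∃ z : V → ℝ, (∀ v, 0 < z v) ∧ ∀ v, (splitMatrix side d r *ᵥ z) v =
      t * z v - if side v = !s ∧ d v = r then splitPoly side d r (t ^ 2) / t else 0 := by
  have hℓ : (0 : ℝ) < outerCard side d r (!s) := Nat.cast_pos.2 (h _)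
  let ζ (s' : Bool) : ℝ := if s' = s then (2 * r + 1) * outerCard side d r (!s) * t
    else t ^ 2 - outerCard side d r s * innerWeight side d r (!s)
  refine ⟨splitVec side d r t ζ, splitVec_pos ht (fun s' => ?_) h, fun v => ?_⟩
  · simp only [ζ]
    split_ifs
    · positivity
    · linarith
  by_cases hv : d v = r
  · rw [splitMatrix_mulVec_splitVec_of_eq hv, splitVec, if_pos hv, splitPoly_eq s]
    rcases Bool.eq_or_eq_not (side v) s with hvs | hvs <;> simp [ζ, hvs, hv] <;> field_simp <;> ring
  · simp [splitMatrix_mulVec_splitVec_of_ne ht.ne' hv, hv]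

variable [DecidableEq V]

lemma minEig_splitMatrix (h : ∀ s, 0 < outerCard side d r s) (ht : 0 < t)
    (hs : outerCard side d r s * innerWeight side d r (!s) < t ^ 2)
    (hpoly : splitPoly side d r (t ^ 2) = 0) : minEig (splitMatrix side d r) = -t := by
  obtain ⟨z, hz, hMz⟩ := exists_pos_splitMatrix_mulVec h ht hs
  obtain ⟨v, -⟩ := card_pos.1 (h true)
  have : Nonempty V := ⟨v⟩
  refine minEig_eq_neg (side := side) (fun u v => ?_) (fun u v huv => ?_) hz ?_
  · simp only [splitMatrix, of_apply]
    split_ifs <;> positivity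
  · simp [splitMatrix, huv]
  · ext v
    simp [hMz, hpoly]

lemma minEig_lt_neg_of_splitMatrix_le {M : Matrix V V ℝ} (hM : M.IsSymm)
    (hside : ∀ u v, side u = side v → M u v = 0) (hle : ∀ u v, splitMatrix side d r u v ≤ M u v)
    (h : ∀ s, 0 < outerCard side d r s) (ht : 0 < t)
    (hs : outerCard side d r s * innerWeight side d r (!s) < t ^ 2)
    (hpoly : splitPoly side d r (t ^ 2) ≤ 0)
    (hlt : splitPoly side d r (t ^ 2) < 0 ∨ M ≠ splitMatrix side d r) : minEig M < -t := by
  obtain ⟨z, hz, hMz⟩ := exists_pos_splitMatrix_mulVec h ht hs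
  have hdefect : splitPoly side d r (t ^ 2) / t ≤ 0 := div_nonpos_of_nonpos_of_nonneg hpoly ht.le
  have hsplit (v : V) : t * z v ≤ (splitMatrix side d r *ᵥ z) v := by
    rw [hMz]
    split_ifs <;> linarith
  have hmul (u v : V) : splitMatrix side d r u v * z v ≤ M u v * z v :=
    mul_le_mul_of_nonneg_right (hle u v) (hz v).le
  have hmono (v : V) : (splitMatrix side d r *ᵥ z) v ≤ (M *ᵥ z) v :=
    sum_le_sum fun w _ => hmul v w
  refine minEig_lt_neg hM hside hz (fun v => (hsplit v).trans (hmono v)) ?_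
  rcases hlt with hlt | hne
  · obtain ⟨v, hv⟩ := card_pos.1 (h (!s))
    refine ⟨v, lt_of_lt_of_le ?_ (hmono v)⟩
    rw [hMz, if_pos (mem_filter.1 hv).2]
    linarith [div_neg_of_neg_of_pos hlt ht]
  · obtain ⟨u, hu⟩ := Function.ne_iff.1 hne
    obtain ⟨v, huv⟩ := Function.ne_iff.1 hu
    exact ⟨u, (hsplit u).trans_lt (sum_lt_sum (fun w _ => hmul u w)
      ⟨v, mem_univ v, mul_lt_mul_of_pos_right ((hle u v).lt_of_ne' huv) (hz v)⟩)⟩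

end SplitMatrix

section CentralEdge

variable {V : Type*} {G : SimpleGraph V} {r : ℕ} {u v : V} {s : Bool}

/-- A division of a connected graph into two sides joined by a single edge, whose end on side `s` is
`center s`. -/
structure BridgeSplit (G : SimpleGraph V) where
  connected : G.Connected
  side : V → Bool
  center : Bool → V
  side_center (s : Bool) : side (center s) = s
  adj_center (s : Bool) : G.Adj (center s) (center !s)
  eq_center {u v : V} : G.Adj u v → side u ≠ side v → u = center (side u)

namespace BridgeSplit

variable (S : BridgeSplit G)

/-- The distance of a vertex from the end of the bridge on its own side. -/
noncomputable def depth (u : V) : ℕ := G.dist u (S.center (S.side u))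

/-- The number of vertices on side `s`. -/
def halfCard [Fintype V] (s : Bool) : ℕ := #{v | S.side v = s}

lemma side_eq_not (h : S.side u ≠ S.side v) : S.side v = !S.side u :=
  Bool.eq_not_iff.2 h.symm

lemma depth_eq (h : S.side u = s) : S.depth u = G.dist u (S.center s) := by
  rw [depth, h]

lemma depth_eq_zero_iff : S.depth u = 0 ↔ u = S.center (S.side u) :=
  S.connected.dist_eq_zero_iff

@[simp]
lemma depth_center (s : Bool) : S.depth (S.center s) = 0 := by
  rw [depth_eq_zero_iff, side_center]

lemma depth_le_add_one (hadj : G.Adj u v) (h : S.side u = S.side v) :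
    S.depth u ≤ S.depth v + 1 := by
  have := S.connected.dist_triangle (u := u) (v := v) (w := S.center (S.side u))
  rwa [dist_eq_one_iff_adj.2 hadj, ← depth, ← S.depth_eq h.symm, add_comm] at this

lemma depth_add_depth_add_one_le_length (p : G.Walk u v) (h : S.side u ≠ S.side v) :
    S.depth u + S.depth v + 1 ≤ p.length := by
  induction p with
  | nil => exact absurd rfl h
  | @cons u w v hadj p ih =>
    rw [Walk.length_cons]
    by_cases huw : S.side u = S.side w
    · have := S.depth_le_add_one hadj huw
      have := ih (huw ▸ h)
      lia
    · have hw : w = S.center (S.side v) := by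
        rw [S.side_eq_not h, ← S.side_eq_not huw]
        exact S.eq_center hadj.symm (Ne.symm huw)
      have hu : S.depth u = 0 := S.depth_eq_zero_iff.2 (S.eq_center hadj huw)
      have hv : S.depth v ≤ p.length := by
        rw [depth, ← hw, dist_comm]
        exact dist_le p
      lia

lemma dist_eq_of_side_ne (h : S.side u ≠ S.side v) : G.dist u v = S.depth u + S.depth v + 1 := by
  apply le_antisymm
  · have h₁ := S.connected.dist_triangle (u := u) (v := S.center (S.side u)) (w := v)
    have h₂ := S.connected.dist_triangle (u := S.center (S.side u)) (v := S.center (S.side v))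
      (w := v)
    have h₃ := dist_eq_one_iff_adj.2 (S.adj_center (S.side u))
    rw [← S.side_eq_not h] at h₃
    rw [← S.depth_eq rfl] at h₁
    rw [dist_comm (u := S.center (S.side v)), ← S.depth_eq rfl] at h₂
    lia
  · obtain ⟨p, hp⟩ := S.connected.exists_walk_length_eq_dist u v
    exact hp ▸ S.depth_add_depth_add_one_le_length p h

lemma dist_le_of_side_eq (h : S.side u = S.side v) : G.dist u v ≤ S.depth u + S.depth v := by
  rw [S.depth_eq h, S.depth_eq (u := v) rfl, dist_comm (u := v)]
  exact S.connected.dist_triangle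

lemma halfCard_add_halfCard_not [Fintype V] (s : Bool) :
    S.halfCard s + S.halfCard (!s) = Fintype.card V := by
  simp only [halfCard, Bool.eq_not_iff]
  exact card_filter_add_card_filter_not _

lemma exists_halfCard_le_halfCard_not [Fintype V] : ∃ s, S.halfCard s ≤ S.halfCard (!s) :=
  (le_total (S.halfCard true) (S.halfCard false)).elim (⟨true, ·⟩) (⟨false, ·⟩)

end BridgeSplit

lemma exists_bridgeSplit (hG : G.IsTree) (h : G.Adj u v) :
    ∃ S : BridgeSplit G, S.center true = u ∧ S.center false = v := by
  classical
  set H := G.deleteEdges {s(u, v)} with hH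
  have hbridge : ¬H.Reachable u v :=
    isBridge_iff.1 (isAcyclic_iff_forall_adj_isBridge.1 hG.isAcyclic h)
  have hcross {x y : V} (hadj : G.Adj x y) (hne : ¬(H.Reachable u x ↔ H.Reachable u y)) :
      x = u ∧ y = v ∨ x = v ∧ y = u := by
    by_contra hxy
    have : H.Adj x y := by
      rw [hH, deleteEdges_adj, Set.mem_singleton_iff, Sym2.eq_iff]
      exact ⟨hadj, hxy⟩
    exact hne ⟨fun hx => hx.trans this.reachable, fun hy => hy.trans this.symm.reachable⟩
  refine ⟨⟨hG.connected, fun x => decide (H.Reachable u x), fun s => if s then u else v,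
    fun s => ?_, fun s => ?_, fun hadj hne => ?_⟩, rfl, rfl⟩
  · cases s <;> simp [hbridge]
  · cases s
    · exact h.symm
    · exact h
  · rcases hcross hadj fun hiff => hne (decide_eq_decide.2 hiff) with ⟨rfl, -⟩ | ⟨rfl, -⟩ <;>
      simp [hbridge]

/-- A division of a graph of diameter `2 * r + 1` by the central edge: on either side `s` the
greatest depth is `r`, and it is attained at `endpoint s`. -/
structure CentralSplit (G : SimpleGraph V) (r : ℕ) extends BridgeSplit G where
  endpoint : Bool → V
  side_endpoint (s : Bool) : side (endpoint s) = s
  depth_endpoint (s : Bool) : toBridgeSplit.depth (endpoint s) = r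
  depth_le (u : V) : toBridgeSplit.depth u ≤ r

/-- A bridge is central if both its ends are within distance `r` of the corresponding ends of a
diametral path of length `2 * r + 1`. -/
def BridgeSplit.toCentralSplit (S : BridgeSplit G) (e : Bool → V)
    (hcenter : ∀ s, G.dist (e s) (S.center s) ≤ r) (he : ∀ s, G.dist (e s) (e !s) = 2 * r + 1)
    (hmax : ∀ u v, G.dist u v ≤ 2 * r + 1) : CentralSplit G r :=
  have hside (s : Bool) : S.side (e s) = s := by
    by_contra hs
    have h₁ := S.dist_eq_of_side_ne (u := e s) (v := S.center s) (by rwa [S.side_center])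
    have h₂ := S.connected.dist_triangle (u := e s) (v := S.center !s) (w := e !s)
    have h₃ := hcenter !s
    rw [← S.depth_eq (Bool.eq_not_iff.2 hs), dist_comm (u := S.center !s)] at h₂
    have := hcenter s
    have := he s
    have := S.depth_center s
    lia
  have hne (s : Bool) : S.side (e s) ≠ S.side (e !s) := by
    rw [hside, hside]
    exact Bool.self_ne_not s
  have hdepth (s : Bool) : S.depth (e s) = r := by
    have := S.dist_eq_of_side_ne (hne s)
    have := S.depth_eq (hside s)
    have := S.depth_eq (hside !s)
    have := hcenter s
    have := hcenter !s
    have := he s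
    lia
  { S with
    endpoint := e
    side_endpoint := hside
    depth_endpoint := hdepth
    depth_le := fun u => by
      have := S.dist_eq_of_side_ne (u := u) (v := e !S.side u)
        (by rw [hside]; exact Bool.self_ne_not _)
      have := hmax u (e !S.side u)
      have := hdepth !S.side u
      lia }

lemma CentralSplit.side_ne_side_endpoint (S : CentralSplit G r) (u : V) :
    S.side u ≠ S.side (S.endpoint !S.side u) := by
  rw [S.side_endpoint]
  exact Bool.self_ne_not _

variable [Fintype V]

lemma dist_le_gdiam (u v : V) : G.dist u v ≤ gdiam G :=
  le_sup (f := fun p : V × V => G.dist p.1 p.2) (mem_univ (u, v))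

lemma exists_dist_eq_gdiam [Nonempty V] (G : SimpleGraph V) : ∃ u v, G.dist u v = gdiam G := by
  obtain ⟨⟨u, v⟩, -, h⟩ := exists_mem_eq_sup univ univ_nonempty fun p : V × V => G.dist p.1 p.2
  exact ⟨u, v, h.symm⟩

lemma nonempty_centralSplit (hG : G.IsTree) (h : gdiam G = 2 * r + 1) :
    Nonempty (CentralSplit G r) := by
  have := hG.connected.nonempty
  obtain ⟨x, y, hxy⟩ := exists_dist_eq_gdiam G
  rw [h] at hxy
  obtain ⟨p, hp⟩ := hG.connected.exists_walk_length_eq_dist x y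
  obtain ⟨S, hS₁, hS₂⟩ := exists_bridgeSplit hG (p.adj_getVert_succ (i := r) (by lia))
  have hx : G.dist x (p.getVert r) ≤ r := (dist_le (p.take r)).trans (by simp)
  have hy : G.dist (p.getVert (r + 1)) y ≤ r := by
    refine (dist_le (p.drop (r + 1))).trans ?_
    rw [Walk.drop_length]
    lia
  refine ⟨S.toCentralSplit (fun s => if s then x else y) (fun s => ?_) (fun s => ?_) fun u v =>
    h ▸ dist_le_gdiam u v⟩
  · cases s
    · simpa [hS₂, dist_comm] using hy
    · simpa [hS₁] using hx
  · cases s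
    · simpa [dist_comm] using hxy
    · simpa using hxy

namespace CentralSplit

variable (S : CentralSplit G r)

lemma ecc_eq (u : V) : ecc G u = S.depth u + r + 1 := by
  apply le_antisymm
  · refine Finset.sup_le fun v _ => ?_
    have := S.depth_le v
    by_cases h : S.side u = S.side v
    · have := S.dist_le_of_side_eq h
      lia
    · have := S.dist_eq_of_side_ne h
      lia
  · have := S.dist_eq_of_side_ne (S.side_ne_side_endpoint u)
    rw [S.depth_endpoint] at this
    exact this ▸ le_sup (f := fun v => G.dist u v) (mem_univ _)

lemma eccMatrix_eq_splitMatrix : eccMatrix G = splitMatrix S.side S.depth r := by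
  ext u v
  have hu := S.depth_le u
  have hv := S.depth_le v
  simp only [eccMatrix, splitMatrix, of_apply, S.ecc_eq]
  by_cases h : S.side u = S.side v
  · have := S.dist_le_of_side_eq h
    rw [if_neg (by lia), if_neg fun h' => h'.1 h]
  · have hdist := S.dist_eq_of_side_ne h
    refine if_ctx_congr ?_ (fun _ => by rw [hdist]; push_cast; rfl) fun _ => rfl
    constructor
    · intro
      exact ⟨h, by lia⟩
    · rintro ⟨-, h'⟩
      lia

lemma outerCard_depth_one (S : CentralSplit G 1) (s : Bool) :
    outerCard S.side S.depth 1 s = S.halfCard s - 1 := by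
  classical
  rw [outerCard, BridgeSplit.halfCard, ← card_erase_of_mem (a := S.center s)
    (by simp [S.side_center])]
  congr 1
  ext v
  have := S.depth_le v
  have hzero := S.depth_eq_zero_iff (u := v)
  simp only [mem_filter_univ, mem_erase]
  constructor
  · rintro ⟨rfl, h⟩
    exact ⟨fun hv => by lia, rfl⟩
  · rintro ⟨hv, rfl⟩
    exact ⟨rfl, by have := mt hzero.1 hv; lia⟩

lemma innerWeight_depth_one (S : CentralSplit G 1) (s : Bool) :
    innerWeight S.side S.depth 1 s = 4 := by
  have : ({v | S.side v = s ∧ S.depth v ≠ 1} : Finset V) = {S.center s} := by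
    ext v
    have hle := S.depth_le v
    simp only [mem_filter_univ, mem_singleton]
    constructor
    · rintro ⟨rfl, h⟩
      exact S.depth_eq_zero_iff.1 (by lia)
    · rintro rfl
      simp [S.side_center]
  rw [innerWeight, this, sum_singleton, S.depth_center]
  norm_num

end CentralSplit

end CentralEdge

section Truncation

variable {V : Type*} [DecidableEq V] {G : SimpleGraph V} {r : ℕ} {u : V}

namespace CentralSplit

variable (S : CentralSplit G r)

/-- The depth of `u` after moving the endpoints to depth `2` and every other vertex next to the
center of its side; this is the depth function of the trees `T_{n,5}^{a,b}`. -/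
def truncDepth (u : V) : ℕ :=
  if u = S.center (S.side u) then 0 else if u = S.endpoint (S.side u) then 2 else 1

lemma truncDepth_eq_two_iff (hr : r ≠ 0) : S.truncDepth u = 2 ↔ u = S.endpoint (S.side u) := by
  have hne : S.endpoint (S.side u) ≠ S.center (S.side u) := fun h =>
    hr ((S.depth_endpoint (S.side u)).symm.trans (by rw [h, S.depth_center]))
  unfold truncDepth
  split_ifs with h₁ h₂
  · simpa [← h₁] using fun h => hne.symm (h₁.symm.trans h)
  · simpa using h₂
  · simpa using h₂

lemma truncDepth_endpoint (hr : r ≠ 0) (s : Bool) : S.truncDepth (S.endpoint s) = 2 := by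
  rw [S.truncDepth_eq_two_iff hr, S.side_endpoint]

lemma truncDepth_le_depth (hr : 2 ≤ r) (u : V) : S.truncDepth u ≤ S.depth u := by
  unfold truncDepth
  split_ifs with h₁ h₂
  · exact Nat.zero_le _
  · rw [h₂]
    exact hr.trans_eq (S.depth_endpoint _).symm
  · exact Nat.one_le_iff_ne_zero.2 fun h => h₁ (S.depth_eq_zero_iff.1 h)

lemma adj_center_of_truncDepth_eq_depth (h : S.truncDepth u = S.depth u)
    (hc : u ≠ S.center (S.side u)) (he : u ≠ S.endpoint (S.side u)) :
    G.Adj u (S.center (S.side u)) := by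
  rw [truncDepth, if_neg hc, if_neg he] at h
  exact dist_eq_one_iff_adj.1 h.symm

lemma splitMatrix_truncDepth_le (hr : 2 ≤ r) (u v : V) :
    splitMatrix S.side S.truncDepth 2 u v ≤ splitMatrix S.side S.depth r u v := by
  have hdepth {w : V} (h : S.truncDepth w = 2) : S.depth w = r := by
    rw [(S.truncDepth_eq_two_iff (by lia)).1 h, S.depth_endpoint]
  simp only [splitMatrix, of_apply]
  split_ifs with h₁ h₂ h₂
  · exact_mod_cast Nat.add_le_add_right
      (Nat.add_le_add (S.truncDepth_le_depth hr u) (S.truncDepth_le_depth hr v)) 1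
  · exact absurd ⟨h₁.1, h₁.2.imp hdepth hdepth⟩ h₂
  · positivity
  · rfl

lemma eq_two_and_truncDepth_eq_depth (hr : 2 ≤ r)
    (h : splitMatrix S.side S.depth r = splitMatrix S.side S.truncDepth 2) :
    r = 2 ∧ S.truncDepth = S.depth := by
  have hsum (u : V) : S.depth u + r = S.truncDepth u + 2 := by
    have hu := congrFun₂ h u (S.endpoint !S.side u)
    simp only [splitMatrix, of_apply, S.depth_endpoint, S.truncDepth_endpoint (r := r) (by lia),
      or_true, and_true, if_pos (S.side_ne_side_endpoint u)] at hu
    exact_mod_cast add_right_cancel hu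
  have hr2 : r = 2 := by
    have := hsum (S.endpoint true)
    rw [S.depth_endpoint, S.truncDepth_endpoint (by lia)] at this
    lia
  exact ⟨hr2, funext fun u => by have := hsum u; lia⟩

variable [Fintype V]

lemma outerCard_truncDepth (hr : r ≠ 0) (s : Bool) : outerCard S.side S.truncDepth 2 s = 1 := by
  refine card_eq_one.2 ⟨S.endpoint s, ext fun v => ?_⟩
  simp only [mem_filter_univ, mem_singleton, S.truncDepth_eq_two_iff hr]
  constructor
  · rintro ⟨rfl, h⟩
    exact h
  · rintro rfl
    simp [S.side_endpoint]

lemma innerWeight_truncDepth (hr : r ≠ 0) (s : Bool) :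
    innerWeight S.side S.truncDepth 2 s = 16 * S.halfCard s - 23 := by
  have hterm {v : V} (hv : S.side v = s) :
      (if S.truncDepth v ≠ 2 then ((S.truncDepth v : ℝ) + (2 : ℕ) + 1) ^ 2 else 0) =
        16 - (if v = S.center s then 7 else 0) - (if v = S.endpoint s then 16 else 0) := by
    subst hv
    by_cases he : v = S.endpoint (S.side v)
    · have hc : v ≠ S.center (S.side v) := fun hc => by
        have := (S.truncDepth_eq_two_iff hr).2 he
        rw [truncDepth, if_pos hc] at this
        lia
      rw [if_neg (not_not.2 ((S.truncDepth_eq_two_iff hr).2 he)), if_neg hc, if_pos he]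
      norm_num
    · rw [if_pos (mt (S.truncDepth_eq_two_iff hr).1 he), if_neg he]
      unfold truncDepth
      split_ifs <;> norm_num
  rw [innerWeight, ← filter_filter, sum_filter, sum_congr rfl fun v hv => hterm (mem_filter.1 hv).2,
    sum_sub_distrib, sum_sub_distrib, sum_ite_eq', sum_ite_eq',
    if_pos (by simp [S.side_center]), if_pos (by simp [S.side_endpoint])]
  simp only [sum_const, BridgeSplit.halfCard, nsmul_eq_mul]
  ring

end CentralSplit

end Truncation

section ExtremalTree

variable {a b : ℕ}

lemma tndab_adj_path (i : Fin 5) : (Tndab 5 a b).Adj (.inl i.castSucc) (.inl i.succ) :=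
  (fromRel_adj _ _ _).2 ⟨fun h => i.castSucc_lt_succ.ne (Sum.inl.inj h), .inl (.inl ⟨i, rfl, rfl⟩)⟩

lemma tndab_adj_left (j : Fin a) : (Tndab 5 a b).Adj (.inl 2) (.inr (.inl j)) :=
  (fromRel_adj _ _ _).2 ⟨Sum.inl_ne_inr, .inl (.inr (.inl ⟨j, rfl, rfl⟩))⟩

lemma tndab_adj_right (j : Fin b) : (Tndab 5 a b).Adj (.inl 3) (.inr (.inr j)) :=
  (fromRel_adj _ _ _).2 ⟨Sum.inl_ne_inr, .inl (.inr (.inr ⟨j, rfl, rfl⟩))⟩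

lemma tndab_adj_induction {p : Fin 6 ⊕ Fin a ⊕ Fin b → Fin 6 ⊕ Fin a ⊕ Fin b → Prop}
    (symm : ∀ x y, p x y → p y x) (path : ∀ i : Fin 5, p (.inl i.castSucc) (.inl i.succ))
    (left : ∀ j, p (.inl 2) (.inr (.inl j))) (right : ∀ j, p (.inl 3) (.inr (.inr j)))
    {x y : Fin 6 ⊕ Fin a ⊕ Fin b} (h : (Tndab 5 a b).Adj x y) : p x y := by
  rw [Tndab, fromRel_adj] at h
  rcases h.2 with (⟨i, rfl, rfl⟩ | ⟨j, rfl, rfl⟩ | ⟨j, rfl, rfl⟩) |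
    (⟨i, rfl, rfl⟩ | ⟨j, rfl, rfl⟩ | ⟨j, rfl, rfl⟩)
  exacts [path i, left j, right j, symm _ _ (path i), symm _ _ (left j), symm _ _ (right j)]

/-- The side of the central edge `v₂v₃` on which a vertex of `Tndab 5 a b` lies. -/
def tndabSide : Fin 6 ⊕ Fin a ⊕ Fin b → Bool :=
  Sum.elim ![true, true, true, false, false, false] (Sum.elim (fun _ => true) fun _ => false)

/-- The ends `v₂` and `v₃` of the central edge of `Tndab 5 a b`. -/
def tndabCenter (s : Bool) : Fin 6 ⊕ Fin a ⊕ Fin b := .inl (if s then 2 else 3)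

/-- The ends `v₀` and `v₅` of the path of `Tndab 5 a b`. -/
def tndabEndpoint (s : Bool) : Fin 6 ⊕ Fin a ⊕ Fin b := .inl (if s then 0 else 5)

lemma tndabSide_center (s : Bool) : tndabSide (tndabCenter s : _ ⊕ Fin a ⊕ Fin b) = s := by
  cases s <;> rfl

lemma tndab_adj_center (s : Bool) :
    (Tndab 5 a b).Adj (tndabCenter s) (tndabCenter !s) := by
  cases s
  exacts [(tndab_adj_path 2).symm, tndab_adj_path 2]

lemma tndab_adj_center_of_ne {x : Fin 6 ⊕ Fin a ⊕ Fin b} (hc : x ≠ tndabCenter (tndabSide x))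
    (he : x ≠ tndabEndpoint (tndabSide x)) : (Tndab 5 a b).Adj x (tndabCenter (tndabSide x)) := by
  rcases x with i | j | j
  · fin_cases i
    exacts [absurd rfl he, tndab_adj_path 1, absurd rfl hc, absurd rfl hc,
      (tndab_adj_path 3).symm, absurd rfl he]
  · exact (tndab_adj_left j).symm
  · exact (tndab_adj_right j).symm

lemma exists_walk_endpoint_center (s : Bool) :
    ∃ p : (Tndab 5 a b).Walk (tndabEndpoint s) (tndabCenter s), p.length = 2 := by
  cases s
  · exact ⟨.cons (tndab_adj_path 4).symm (.cons (tndab_adj_path 3).symm .nil), rfl⟩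
  · exact ⟨.cons (tndab_adj_path 0) (.cons (tndab_adj_path 1) .nil), rfl⟩

lemma connected_tndab : (Tndab 5 a b).Connected := by
  have hside (x) : (Tndab 5 a b).Reachable x (tndabCenter (tndabSide x)) := by
    by_cases hc : x = tndabCenter (tndabSide x)
    · exact hc ▸ .rfl
    by_cases he : x = tndabEndpoint (tndabSide x)
    · obtain ⟨p, -⟩ := exists_walk_endpoint_center (a := a) (b := b) (tndabSide x)
      exact ⟨p.copy he.symm rfl⟩
    · exact (tndab_adj_center_of_ne hc he).reachable
  have hroot (x) : (Tndab 5 a b).Reachable x (tndabCenter true) := by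
    refine (hside x).trans ?_
    cases tndabSide x
    exacts [(tndab_adj_center false).reachable, .rfl]
  have : Nonempty (Fin 6 ⊕ Fin a ⊕ Fin b) := ⟨tndabCenter true⟩
  exact ⟨fun x y => (hroot x).trans (hroot y).symm⟩

/-- The division of `Tndab 5 a b` by its central edge. -/
def tndabBridgeSplit (a b : ℕ) : BridgeSplit (Tndab 5 a b) where
  connected := connected_tndab
  side := tndabSide
  center := tndabCenter
  side_center := tndabSide_center
  adj_center := tndab_adj_center
  eq_center hadj hne := by
    refine (tndab_adj_induction (p := fun x y => tndabSide x ≠ tndabSide y →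
      x = tndabCenter (tndabSide x) ∧ y = tndabCenter (tndabSide y))
      (fun x y h hne => (h hne.symm).symm) (fun i => ?_) (fun j h => absurd rfl h)
      (fun j h => absurd rfl h) hadj hne).1
    fin_cases i <;> simp [tndabSide, tndabCenter]

lemma depth_tndabEndpoint (s : Bool) :
    (tndabBridgeSplit a b).depth (tndabEndpoint s) = 2 := by
  have hside : (tndabBridgeSplit a b).side (tndabEndpoint s) = s := by cases s <;> rfl
  rw [(tndabBridgeSplit a b).depth_eq hside]
  apply le_antisymm
  · obtain ⟨p, hp⟩ := exists_walk_endpoint_center (a := a) (b := b) s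
    exact (dist_le p).trans_eq hp
  · refine connected_tndab.one_lt_dist_of_ne_of_not_adj ?_ ?_
    · cases s <;> simp [tndabBridgeSplit, tndabEndpoint, tndabCenter]
    · cases s <;> simp [tndabBridgeSplit, tndabEndpoint, tndabCenter, Tndab, Fin.forall_fin_succ]

lemma depth_tndab_eq_one {x : Fin 6 ⊕ Fin a ⊕ Fin b} (hc : x ≠ tndabCenter (tndabSide x))
    (he : x ≠ tndabEndpoint (tndabSide x)) : (tndabBridgeSplit a b).depth x = 1 :=
  dist_eq_one_iff_adj.2 (tndab_adj_center_of_ne hc he)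

/-- The central edge of `Tndab 5 a b` splits its diameter evenly. -/
def tndabSplit (a b : ℕ) : CentralSplit (Tndab 5 a b) 2 where
  toBridgeSplit := tndabBridgeSplit a b
  endpoint := tndabEndpoint
  side_endpoint s := by cases s <;> rfl
  depth_endpoint := depth_tndabEndpoint
  depth_le x := by
    by_cases hc : x = tndabCenter (tndabSide x)
    · rw [(tndabBridgeSplit a b).depth_eq_zero_iff.2 hc]
      exact Nat.zero_le 2
    by_cases he : x = tndabEndpoint (tndabSide x)
    · rw [he, depth_tndabEndpoint]
    · rw [depth_tndab_eq_one hc he]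
      exact one_le_two

lemma truncDepth_tndabSplit : (tndabSplit a b).truncDepth = (tndabSplit a b).depth := by
  ext x
  unfold CentralSplit.truncDepth
  split_ifs with hc he
  · exact ((tndabSplit a b).depth_eq_zero_iff.2 hc).symm
  · rw [he]
    exact ((tndabSplit a b).depth_endpoint _).symm
  · exact (depth_tndab_eq_one hc he).symm

lemma halfCard_tndabSplit_true : (tndabSplit a b).halfCard true = a + 3 := by
  rw [BridgeSplit.halfCard, card_filter, Fintype.sum_sum_type, Fintype.sum_sum_type,
    Fin.sum_univ_six]
  simp [tndabSplit, tndabBridgeSplit, tndabSide, add_comm]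

lemma halfCard_tndabSplit_false : (tndabSplit a b).halfCard false = b + 3 := by
  rw [BridgeSplit.halfCard, card_filter, Fintype.sum_sum_type, Fintype.sum_sum_type,
    Fin.sum_univ_six]
  simp [tndabSplit, tndabBridgeSplit, tndabSide, add_comm]

end ExtremalTree

section Isomorphism

variable {V W : Type*} {G : SimpleGraph V} {H : SimpleGraph W}

lemma dist_map_iso (f : G ≃g H) (hG : G.Connected) (u v : V) :
    H.dist (f u) (f v) = G.dist u v := by
  apply le_antisymm
  · obtain ⟨p, hp⟩ := hG.exists_walk_length_eq_dist u v
    rw [← hp, ← Walk.length_map f.toHom p]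
    exact dist_le _
  · obtain ⟨p, hp⟩ := (f.connected_iff.1 hG).exists_walk_length_eq_dist (f u) (f v)
    rw [← hp, ← Walk.length_map f.symm.toHom p]
    simpa using dist_le (p.map f.symm.toHom)

lemma CentralSplit.exists_adj_endpoint_adj_center (S : CentralSplit G 2) (s : Bool) :
    ∃ p, S.side p = s ∧ G.Adj (S.endpoint s) p ∧ G.Adj p (S.center s) := by
  have hdist : G.dist (S.endpoint s) (S.center s) = 2 := by
    rw [← S.depth_eq (S.side_endpoint s), S.depth_endpoint]
  obtain ⟨w, hw⟩ := S.connected.exists_walk_length_eq_dist (S.endpoint s) (S.center s)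
  rw [hdist] at hw
  have hadj₁ : G.Adj (S.endpoint s) (w.getVert 1) := by
    simpa using w.adj_getVert_succ (i := 0) (by lia)
  have hadj₂ : G.Adj (w.getVert 1) (S.center s) := by
    simpa [← hw] using w.adj_getVert_succ (i := 1) (by lia)
  refine ⟨w.getVert 1, ?_, hadj₁, hadj₂⟩
  by_contra hs
  have := S.dist_eq_of_side_ne (u := S.endpoint s) (v := w.getVert 1)
    (by rw [S.side_endpoint]; exact Ne.symm hs)
  rw [dist_eq_one_iff_adj.2 hadj₁, S.depth_endpoint] at this
  lia

variable [Fintype V] [Fintype W]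

lemma ecc_map_iso (f : G ≃g H) (hG : G.Connected) (u : V) : ecc H (f u) = ecc G u := by
  rw [ecc, ecc, ← map_univ_equiv f.toEquiv, sup_map]
  exact sup_congr rfl fun v _ => dist_map_iso f hG u v

lemma minEig_eccMatrix_congr [DecidableEq V] [DecidableEq W] (f : G ≃g H) (hG : G.Connected) :
    minEig (eccMatrix G) = minEig (eccMatrix H) := by
  have : eccMatrix G = (eccMatrix H).reindex f.symm.toEquiv f.symm.toEquiv := by
    ext u v
    change eccMatrix G u v = eccMatrix H (f u) (f v)
    simp only [eccMatrix, of_apply, ecc_map_iso f hG, dist_map_iso f hG]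
  rw [this, minEig, minEig, charpoly_reindex]

variable [DecidableEq V] {T : SimpleGraph V} {S : CentralSplit T 2} {a b : ℕ} {s : Bool}

lemma CentralSplit.exists_leaves (hS : S.truncDepth = S.depth) (ha : S.halfCard s = a + 3) {p : V}
    (hp : S.side p = s) (hpc : T.Adj p (S.center s)) :
    ∃ g : Fin a → V, (∀ j, T.Adj (S.center s) (g j)) ∧
      ∀ v, S.side v = s → v = S.endpoint s ∨ v = p ∨ v = S.center s ∨ ∃ j, v = g j := by
  have hpe : p ≠ S.endpoint s := by
    rintro rfl
    have := S.depth_eq (S.side_endpoint s)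
    rw [S.depth_endpoint, dist_eq_one_iff_adj.2 hpc] at this
    lia
  have hce : S.center s ≠ S.endpoint s := fun h => by
    have := S.depth_endpoint s
    rw [← h, S.depth_center] at this
    lia
  set A := ({v | S.side v = s} : Finset V) \ {S.endpoint s, p, S.center s} with hA
  have hcard : #A = a := by
    rw [hA, card_sdiff_of_subset, ← BridgeSplit.halfCard, ha, card_eq_three.2
      ⟨_, _, _, hpe.symm, hce.symm, hpc.ne, rfl⟩]
    · lia
    · simp [insert_subset_iff, S.side_endpoint, hp, S.side_center]
  let e := A.equivFinOfCardEq hcard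
  refine ⟨fun j => e.symm j, fun j => ?_, fun v hv => ?_⟩
  · have hj := (e.symm j).2
    simp only [hA, mem_sdiff, mem_filter_univ, mem_insert, mem_singleton, not_or] at hj
    obtain ⟨hs, he, -, hc⟩ := hj
    have := S.adj_center_of_truncDepth_eq_depth (congrFun hS (e.symm j)) (by rwa [hs])
      (by rwa [hs])
    exact (hs ▸ this).symm
  · by_cases hvA : v ∈ A
    · exact .inr (.inr (.inr ⟨e ⟨v, hvA⟩, by simp⟩))
    · simp only [hA, mem_sdiff, mem_filter_univ, mem_insert, mem_singleton, hv, true_and,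
        not_not] at hvA
      tauto

lemma CentralSplit.nonempty_iso_tndab (hT : T.IsTree) (hS : S.truncDepth = S.depth)
    (ha : S.halfCard s = a + 3) (hb : S.halfCard (!s) = b + 3) :
    Nonempty (T ≃g Tndab 5 a b) := by
  choose p hp hep hpc using S.exists_adj_endpoint_adj_center
  obtain ⟨g, hg, hg'⟩ := exists_leaves hS ha (hp s) (hpc s)
  obtain ⟨k, hk, hk'⟩ := exists_leaves hS hb (hp !s) (hpc !s)
  let f : Fin 6 ⊕ Fin a ⊕ Fin b → V :=
    Sum.elim ![S.endpoint s, p s, S.center s, S.center !s, p !s, S.endpoint !s] (Sum.elim g k)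
  have hsurj : Function.Surjective f := fun v => by
    rcases Bool.eq_or_eq_not (S.side v) s with hv | hv
    · rcases hg' v hv with rfl | rfl | rfl | ⟨j, rfl⟩
      exacts [⟨.inl 0, rfl⟩, ⟨.inl 1, rfl⟩, ⟨.inl 2, rfl⟩, ⟨.inr (.inl j), rfl⟩]
    · rcases hk' v hv with rfl | rfl | rfl | ⟨j, rfl⟩
      exacts [⟨.inl 5, rfl⟩, ⟨.inl 4, rfl⟩, ⟨.inl 3, rfl⟩, ⟨.inr (.inr j), rfl⟩]
  have hcard : Fintype.card (Fin 6 ⊕ Fin a ⊕ Fin b) = Fintype.card V := by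
    rw [← S.halfCard_add_halfCard_not s, ha, hb]
    simp only [Fintype.card_sum, Fintype.card_fin]
    lia
  have hle : Tndab 5 a b ≤ T.comap f := fun x y =>
    tndab_adj_induction (p := (T.comap f).Adj) (fun _ _ h => h.symm)
      (fun i => by
        fin_cases i
        exacts [hep s, hpc s, S.adj_center s, (hpc !s).symm, (hep !s).symm])
      hg hk
  let F : T.comap f ≃g T :=
    ⟨.ofBijective f ((Fintype.bijective_iff_surjective_and_card f).2 ⟨hsurj, hcard⟩), Iff.rfl⟩
  -- A tree is a minimal connected graph, so the inclusion `hle` of connected graphs is an equality.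
  have heq : T.comap f = Tndab 5 a b :=
    ((isTree_iff_minimal_connected.1 (F.isTree_iff.2 hT)).2 connected_tndab hle).antisymm hle
  exact ⟨heq ▸ F.symm⟩

end Isomorphism

section Comparison

variable {V : Type*} [Fintype V] {G : SimpleGraph V} {r : ℕ}

lemma isSymm_eccMatrix (G : SimpleGraph V) : (eccMatrix G).IsSymm := by
  ext u v
  simp only [transpose_apply, eccMatrix, of_apply, G.dist_comm (u := v), min_comm (ecc G v)]

namespace CentralSplit

variable (S : CentralSplit G r)

lemma eccMatrix_apply_of_side_eq {u v : V} (h : S.side u = S.side v) : eccMatrix G u v = 0 := by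
  simp [S.eccMatrix_eq_splitMatrix, splitMatrix, h]

lemma card_le_two_of_diam_one (S : CentralSplit G 0) : Fintype.card V ≤ 2 := by
  refine (Fintype.card_le_of_injective S.side fun u v h => ?_).trans_eq Fintype.card_bool
  have hcenter (w : V) : w = S.center (S.side w) :=
    S.depth_eq_zero_iff.1 (Nat.le_zero.1 (S.depth_le w))
  rw [hcenter u, hcenter v, h]

lemma outerCard_depth_pos (s : Bool) : 0 < outerCard S.side S.depth r s :=
  outerCard_pos ⟨S.endpoint s, S.side_endpoint s, S.depth_endpoint s⟩

variable [DecidableEq V] {a b : ℕ} {s : Bool} {t : ℝ}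

lemma splitPoly_truncDepth (hr : r ≠ 0) (s : Bool) (x : ℝ) :
    splitPoly S.side S.truncDepth 2 x =
      (x - (16 * S.halfCard s - 23)) * (x - (16 * S.halfCard (!s) - 23)) - 25 * x := by
  rw [splitPoly_eq (!s), Bool.not_not]
  simp only [S.outerCard_truncDepth hr, S.innerWeight_truncDepth hr]
  push_cast
  ring

lemma minEig_eccMatrix_lt_neg_of_two_le (hr : 2 ≤ r) (ht : 0 < t)
    (hs : 16 * S.halfCard s - 23 < t ^ 2)
    (hpoly : (t ^ 2 - (16 * S.halfCard s - 23)) * (t ^ 2 - (16 * S.halfCard (!s) - 23)) ≤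
      25 * t ^ 2)
    (hlt : (t ^ 2 - (16 * S.halfCard s - 23)) * (t ^ 2 - (16 * S.halfCard (!s) - 23)) <
      25 * t ^ 2 ∨ ¬(r = 2 ∧ S.truncDepth = S.depth)) :
    minEig (eccMatrix G) < -t := by
  have hr0 : r ≠ 0 := by lia
  refine minEig_lt_neg_of_splitMatrix_le (side := S.side) (d := S.truncDepth) (r := 2) (s := !s)
    (isSymm_eccMatrix G) (fun u v => S.eccMatrix_apply_of_side_eq) (fun u v => ?_)
    (fun s' => ?_) ht ?_ ?_ ?_
  · rw [S.eccMatrix_eq_splitMatrix]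
    exact S.splitMatrix_truncDepth_le hr u v
  · rw [S.outerCard_truncDepth hr0]
    exact one_pos
  · simpa [S.outerCard_truncDepth hr0, S.innerWeight_truncDepth hr0] using hs
  · rwa [S.splitPoly_truncDepth hr0 s, sub_nonpos]
  · rw [S.splitPoly_truncDepth hr0 s, sub_neg, S.eccMatrix_eq_splitMatrix]
    exact hlt.imp_right (mt (S.eq_two_and_truncDepth_eq_depth hr))

lemma minEig_eccMatrix_lt_neg_of_diam_three (S : CentralSplit G 1) {A : Bool → ℝ}
    (hA : ∀ s, (S.halfCard s : ℝ) = A s + 1) (ht : 0 < t) (hs : 4 * A s < t ^ 2)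
    (hpoly : (t ^ 2 - 4 * A s) * (t ^ 2 - 4 * A (!s)) < 9 * (A s * A (!s)) * t ^ 2) :
    minEig (eccMatrix G) < -t := by
  have hcard (s' : Bool) : (outerCard S.side S.depth 1 s' : ℝ) = A s' := by
    have hpos := S.outerCard_depth_pos s'
    rw [S.outerCard_depth_one, Nat.cast_pred (by have := S.outerCard_depth_one s'; lia), hA]
    ring
  have hpoly' : splitPoly S.side S.depth 1 (t ^ 2) < 0 := by
    rw [splitPoly_eq s]
    simp only [hcard, S.innerWeight_depth_one]
    push_cast
    linarith
  refine minEig_lt_neg_of_splitMatrix_le (s := s) (isSymm_eccMatrix G)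
    (fun u v => S.eccMatrix_apply_of_side_eq) (fun u v => ?_) S.outerCard_depth_pos ht ?_
    hpoly'.le (.inl hpoly')
  · rw [S.eccMatrix_eq_splitMatrix]
  · rw [hcard, S.innerWeight_depth_one]
    linarith

end CentralSplit

lemma minEig_eccMatrix_tndab {a b : ℕ} {t : ℝ} (ht : 0 < t) (ha : 16 * (a : ℝ) + 25 < t ^ 2)
    (hroot : (t ^ 2 - (16 * (a : ℝ) + 25)) * (t ^ 2 - (16 * (b : ℝ) + 25)) = 25 * t ^ 2) :
    minEig (eccMatrix (Tndab 5 a b)) = -t := by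
  have hcard := (tndabSplit a b).outerCard_truncDepth two_ne_zero
  have hweight := (tndabSplit a b).innerWeight_truncDepth two_ne_zero true
  rw [(tndabSplit a b).eccMatrix_eq_splitMatrix, ← truncDepth_tndabSplit]
  refine minEig_splitMatrix (s := false) (fun s => ?_) ht ?_ ?_
  · rw [hcard]
    exact one_pos
  · rw [hcard, Bool.not_false, hweight, halfCard_tndabSplit_true]
    push_cast
    linarith
  · rw [(tndabSplit a b).splitPoly_truncDepth two_ne_zero true, Bool.not_true,
      halfCard_tndabSplit_true, halfCard_tndabSplit_false]
    push_cast
    linear_combination hroot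

end Comparison

section MainTheorem

lemma eq_and_eq_or_mul_lt_mul_of_add_eq {p q m n : ℕ} (hpq : p ≤ q) (hqp : q ≤ p + 1)
    (h : m + n = p + q) (hmn : m ≤ n) : (m = p ∧ n = q) ∨ m * n < p * q := by
  obtain ⟨k, rfl⟩ : ∃ k, p = m + k := Nat.exists_eq_add_of_le (by lia)
  obtain rfl : n = q + k := by lia
  rcases k.eq_zero_or_pos with rfl | hk
  · simp
  · right
    nlinarith

lemma mul_lt_of_root {a b A B x : ℝ} (hab : a ≤ b) (hba : b ≤ a + 1) (h10 : 10 ≤ a + b)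
    (hroot : (x - (16 * a + 25)) * (x - (16 * b + 25)) = 25 * x) (hx : 8 * (a + b) + 37 ≤ x)
    (hA : 1 ≤ A) (hB : 1 ≤ B) (hAB : A + B = a + b + 4) :
    (x - 4 * A) * (x - 4 * B) < 9 * (A * B) * x := by
  set s := a + b with hs
  set C := (16 * a + 25) * (16 * b + 25) with hC
  have hmul : s + 3 ≤ A * B := by nlinarith
  have hC_le : (8 * s + 25) ^ 2 - 64 ≤ C := by
    have : C = (8 * s + 25) ^ 2 - 64 * (b - a) ^ 2 := by rw [hs, hC]; ring
    nlinarith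
  have hquad : x ^ 2 - (16 * s + 75) * x + C = 0 := by
    rw [hC, hs]
    linear_combination hroot
  -- With `C` at its lower bound the larger root is concave in `s`; the bound is its tangent at
  -- `s = 10`, with slightly rounded coefficients.
  have hx_le : x ≤ 79 / 8 * s + 289 / 4 := by
    by_contra! hlt
    have : 0 < (x - (79 / 8 * s + 289 / 4)) * (x + (79 / 8 * s + 289 / 4) - (16 * s + 75)) :=
      mul_pos (by linarith) (by linarith)
    nlinarith [hquad, sq_nonneg (s - 10)]
  have hlin : (3 * s + 32) * x < C - 16 * s - 48 := by
    have : (3 * s + 32) * x ≤ (3 * s + 32) * (79 / 8 * s + 289 / 4) :=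
      mul_le_mul_of_nonneg_left hx_le (by linarith)
    nlinarith
  have hmin : (9 * x - 16) * (s + 3) ≤ (9 * x - 16) * (A * B) :=
    mul_le_mul_of_nonneg_left hmul (by linarith)
  calc
    (x - 4 * A) * (x - 4 * B) = x ^ 2 - 4 * (A + B) * x + 16 * (A * B) := by ring
    _ < 9 * (A * B) * x := by
      rw [hAB]
      nlinarith

variable {V : Type*} [Fintype V] [DecidableEq V] {T : SimpleGraph V} {a b r : ℕ} {t : ℝ}

namespace CentralSplit

lemma minEig_eccMatrix_lt_neg_of_card_eq (S : CentralSplit T 1) (hab : a ≤ b) (hba : b ≤ a + 1)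
    (h10 : 10 ≤ a + b) (hcard : Fintype.card V = a + b + 6) (ht : 0 < t)
    (hroot : (t ^ 2 - (16 * (a : ℝ) + 25)) * (t ^ 2 - (16 * (b : ℝ) + 25)) = 25 * t ^ 2)
    (hlarge : 8 * ((a : ℝ) + b) + 37 ≤ t ^ 2) : minEig (eccMatrix T) < -t := by
  obtain ⟨s, hs⟩ := S.exists_halfCard_le_halfCard_not
  have hA (s' : Bool) : (1 : ℝ) ≤ S.halfCard s' - 1 := by
    have hpos := S.outerCard_depth_pos s'
    rw [S.outerCard_depth_one] at hpos
    have : 2 ≤ S.halfCard s' := by lia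
    have : (2 : ℝ) ≤ S.halfCard s' := mod_cast this
    linarith
  have hsum := S.halfCard_add_halfCard_not s
  rw [hcard] at hsum
  have hsum' : (S.halfCard s : ℝ) + S.halfCard (!s) = a + b + 6 := mod_cast hsum
  have hs' : (S.halfCard s : ℝ) ≤ S.halfCard (!s) := mod_cast hs
  refine S.minEig_eccMatrix_lt_neg_of_diam_three (s := s) (A := fun s' => S.halfCard s' - 1)
    (fun _ => (sub_add_cancel _ _).symm) ht (by linarith) ?_
  exact mul_lt_of_root (mod_cast hab) (mod_cast hba) (mod_cast h10) hroot hlarge (hA _) (hA _)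
    (by linarith)

lemma nonempty_iso_tndab_or_minEig_lt_neg (S : CentralSplit T r) (hr : 2 ≤ r) (hT : T.IsTree)
    (hab : a ≤ b) (hba : b ≤ a + 1) (hcard : Fintype.card V = a + b + 6) (ht : 0 < t)
    (hroot : (t ^ 2 - (16 * (a : ℝ) + 25)) * (t ^ 2 - (16 * (b : ℝ) + 25)) = 25 * t ^ 2)
    (hlarge : 8 * ((a : ℝ) + b) + 37 ≤ t ^ 2) :
    Nonempty (T ≃g Tndab 5 a b) ∨ minEig (eccMatrix T) < -t := by
  obtain ⟨s, hs⟩ := S.exists_halfCard_le_halfCard_not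
  have hsum := S.halfCard_add_halfCard_not s
  rw [hcard] at hsum
  have hsum' : (S.halfCard s : ℝ) + S.halfCard (!s) = a + b + 6 := mod_cast hsum
  have hs' : (S.halfCard s : ℝ) ≤ S.halfCard (!s) := mod_cast hs
  have hpoly : (t ^ 2 - (16 * S.halfCard s - 23)) * (t ^ 2 - (16 * S.halfCard (!s) - 23)) =
      25 * t ^ 2 - 256 * ((a + 3) * (b + 3) - S.halfCard s * S.halfCard (!s)) := by
    linear_combination hroot + (-16 * t ^ 2 - 368) * hsum'
  have hsmall : 16 * (S.halfCard s : ℝ) - 23 < t ^ 2 := by linarith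
  rcases eq_and_eq_or_mul_lt_mul_of_add_eq (p := a + 3) (q := b + 3) (by lia) (by lia)
    (by lia) hs with ⟨ha, hb⟩ | hlt
  · have hpoly' : (t ^ 2 - (16 * S.halfCard s - 23)) * (t ^ 2 - (16 * S.halfCard (!s) - 23)) =
        25 * t ^ 2 := by
      rw [hpoly, ha, hb]
      push_cast
      ring
    by_cases hS : r = 2 ∧ S.truncDepth = S.depth
    · obtain ⟨rfl, hS⟩ := hS
      exact .inl (S.nonempty_iso_tndab hT hS ha hb)
    · exact .inr (S.minEig_eccMatrix_lt_neg_of_two_le hr ht hsmall hpoly'.le (.inr hS))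
  · have hlt' : (S.halfCard s : ℝ) * S.halfCard (!s) < (a + 3) * (b + 3) := mod_cast hlt
    exact .inr (S.minEig_eccMatrix_lt_neg_of_two_le hr ht hsmall (by linarith) (.inl (by linarith)))

end CentralSplit

lemma nonempty_iso_tndab_or_minEig_eccMatrix_lt_neg (hT : T.IsTree) (hodd : Odd (gdiam T))
    (hab : a ≤ b) (hba : b ≤ a + 1) (h10 : 10 ≤ a + b) (hcard : Fintype.card V = a + b + 6)
    (ht : 0 < t)
    (hroot : (t ^ 2 - (16 * (a : ℝ) + 25)) * (t ^ 2 - (16 * (b : ℝ) + 25)) = 25 * t ^ 2)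
    (hlarge : 8 * ((a : ℝ) + b) + 37 ≤ t ^ 2) :
    Nonempty (T ≃g Tndab 5 a b) ∨ minEig (eccMatrix T) < -t := by
  obtain ⟨r, hr⟩ := hodd
  obtain ⟨S⟩ := nonempty_centralSplit hT hr
  match r, S with
  | 0, S => exact absurd S.card_le_two_of_diam_one (by lia)
  | 1, S => exact .inr (S.minEig_eccMatrix_lt_neg_of_card_eq hab hba h10 hcard ht hroot hlarge)
  | r + 2, S =>
    exact S.nonempty_iso_tndab_or_minEig_lt_neg (by lia) hT hab hba hcard ht hroot hlarge

lemma minEig_eccMatrix_le_neg_sqrt {n : ℕ} (hT : T.IsTree) (hn : Fintype.card V = n) (h16 : 16 ≤ n)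
    (hodd : Odd (gdiam T)) (hab : a ≤ b) (hba : b ≤ a + 1) (hcard : a + b + 6 = n) {q : ℝ}
    (hq0 : 0 ≤ q) (hq : q ^ 2 = 800 * (n : ℝ) - 1675 + 256 * ((b : ℝ) - a) ^ 2) :
    minEig (eccMatrix T) ≤ -√((16 * (n : ℝ) - 21 + q) / 2) ∧
      (minEig (eccMatrix T) = -√((16 * (n : ℝ) - 21 + q) / 2) ↔
        Nonempty (T ≃g Tndab 5 a b)) := by
  have hcard' : (n : ℝ) = a + b + 6 := mod_cast hcard.symm
  have hab' : (a : ℝ) ≤ b := mod_cast hab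
  have hx : 0 < (16 * (n : ℝ) - 21 + q) / 2 := by linarith [a.cast_nonneg (α := ℝ)]
  have hsq := Real.sq_sqrt hx.le
  set t := √((16 * (n : ℝ) - 21 + q) / 2)
  have ht : 0 < t := Real.sqrt_pos.2 hx
  have hroot : (t ^ 2 - (16 * (a : ℝ) + 25)) * (t ^ 2 - (16 * (b : ℝ) + 25)) = 25 * t ^ 2 := by
    rw [hsq]
    rw [hcard'] at hq ⊢
    linear_combination (1 / 4 : ℝ) * hq
  have hlarge : 8 * ((a : ℝ) + b) + 37 ≤ t ^ 2 := by linarith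
  have hiso (h : Nonempty (T ≃g Tndab 5 a b)) : minEig (eccMatrix T) = -t := by
    obtain ⟨f⟩ := h
    rw [minEig_eccMatrix_congr f hT.connected]
    exact minEig_eccMatrix_tndab ht (by linarith) hroot
  have hlt := nonempty_iso_tndab_or_minEig_eccMatrix_lt_neg hT hodd hab hba (by lia)
    (hn.trans hcard.symm) ht hroot hlarge
  exact ⟨hlt.elim (fun h => (hiso h).le) le_of_lt,
    fun h => hlt.resolve_right h.not_lt, hiso⟩

end MainTheorem

/-- Upper bound on the least eccentricity eigenvalue of a tree on `n ≥ 16` vertices with odd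
diameter, with equality iff `T ≅ T_{n,5}^{⌊(n-6)/2⌋, ⌈(n-6)/2⌉}`. -/
theorem stmt8 {V : Type*} [Fintype V] [DecidableEq V] (T : SimpleGraph V) (n : ℕ)
    (hT : T.IsTree) (hn : Fintype.card V = n) (h16 : 16 ≤ n) (hodd : Odd (gdiam T)) :
    (Odd n →
      minEig (eccMatrix T) ≤
          -Real.sqrt ((16*(n:ℝ) - 21 + Real.sqrt (800*(n:ℝ) - 1419))/2) ∧
      (minEig (eccMatrix T) =
          -Real.sqrt ((16*(n:ℝ) - 21 + Real.sqrt (800*(n:ℝ) - 1419))/2) ↔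
        Nonempty (T ≃g Tndab 5 ((n-6)/2) ((n-5)/2)))) ∧
    (Even n →
      minEig (eccMatrix T) ≤
          -Real.sqrt ((16*(n:ℝ) - 21 + 5*Real.sqrt (32*(n:ℝ) - 67))/2) ∧
      (minEig (eccMatrix T) =
          -Real.sqrt ((16*(n:ℝ) - 21 + 5*Real.sqrt (32*(n:ℝ) - 67))/2) ↔
        Nonempty (T ≃g Tndab 5 ((n-6)/2) ((n-5)/2)))) := by
  have h16' : (16 : ℝ) ≤ n := mod_cast h16
  refine ⟨fun ⟨m, hm⟩ => ?_, fun ⟨m, hm⟩ => ?_⟩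
  · have hb : (n - 5) / 2 = (n - 6) / 2 + 1 := by lia
    refine minEig_eccMatrix_le_neg_sqrt hT hn h16 hodd (by lia) hb.le (by lia)
      (Real.sqrt_nonneg _) ?_
    rw [Real.sq_sqrt (by linarith), hb]
    push_cast
    ring
  · have hb : (n - 5) / 2 = (n - 6) / 2 := by lia
    refine minEig_eccMatrix_le_neg_sqrt hT hn h16 hodd hb.ge (by lia) (by lia)
      (mul_nonneg (by norm_num) (Real.sqrt_nonneg _)) ?_
    rw [mul_pow, Real.sq_sqrt (by linarith), hb]
    ring
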